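/- Let A = ℂ⟨u,v⟩ be the free associative ℂ-algebra on two generators u and v. There exists a unique double bracket db_K on A with db_K(u ⊗ v) = −(vu) ⊗ 1, db_K(v ⊗ u) = (uv) ⊗ 1, db_K(u ⊗ u) = 0, and db_K(v ⊗ v) = 0; moreover, db_K is a modified double Poisson bracket, i.e. with {a,b} := μ(db_K(a ⊗ b)) one has {a,{b,c}} − {b,{a,c}} = {{a,b},c} for all a,b,c ∈ A and {a,b} + {b,a} ∈ [A,A] for all a,b ∈ A. -/

import Mathlib

open TensorProduct

noncomputable section

/-- The free associative ℂ-algebra on two generators. -/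
abbrev FreeA2 : Type := FreeAlgebra ℂ (Fin 2)

/-- The generator `u`. -/
def genU : FreeA2 := FreeAlgebra.ι ℂ 0

/-- The generator `v`. -/
def genV : FreeA2 := FreeAlgebra.ι ℂ 1

/-- `db` is a double bracket: it satisfies the double Leibniz rules. -/
def IsDoubleBracket (db : FreeA2 ⊗[ℂ] FreeA2 →ₗ[ℂ] FreeA2 ⊗[ℂ] FreeA2) : Prop :=
  (∀ a b c : FreeA2, db (a ⊗ₜ[ℂ] (b * c)) =
    (b ⊗ₜ[ℂ] (1 : FreeA2)) * db (a ⊗ₜ[ℂ] c) + db (a ⊗ₜ[ℂ] b) * ((1 : FreeA2) ⊗ₜ[ℂ] c)) ∧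
  (∀ a b c : FreeA2, db ((a * b) ⊗ₜ[ℂ] c) =
    ((1 : FreeA2) ⊗ₜ[ℂ] a) * db (b ⊗ₜ[ℂ] c) + db (a ⊗ₜ[ℂ] c) * (b ⊗ₜ[ℂ] (1 : FreeA2)))

/-- The prescribed values of `db_K` on pairs of generators. -/
def KontsevichGenVals (db : FreeA2 ⊗[ℂ] FreeA2 →ₗ[ℂ] FreeA2 ⊗[ℂ] FreeA2) : Prop :=
  db (genU ⊗ₜ[ℂ] genV) = -((genV * genU) ⊗ₜ[ℂ] (1 : FreeA2)) ∧
  db (genV ⊗ₜ[ℂ] genU) = (genU * genV) ⊗ₜ[ℂ] (1 : FreeA2) ∧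
  db (genU ⊗ₜ[ℂ] genU) = 0 ∧
  db (genV ⊗ₜ[ℂ] genV) = 0

/-!
Write `∂ᵤ a`, `∂ᵥ a` for the cyclic derivatives of `a`. Since twisted derivations of a free algebra
are freely determined by their values on the generators, there is a unique double bracket with any
prescribed values on generators. For Kontsevich's values, `{a, -}` is the derivation `D_a` with
`D_a u = u v ∂ᵥa` and `D_a v = -v u ∂ᵤa`.

Everything rests on the identity `[u, ∂ᵤa] + [v, ∂ᵥa] = 0`, which says that the element
`w_a = v ∂ᵥa - ∂ᵤa u` also equals `∂ᵥa v - u ∂ᵤa`. It gives `D_a (u v) = u v w_a` and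
`D_a (v u) = v u w_a`, so the Jacobi identity `D_{D_a b} = [D_a, D_b]` on the generators becomes
`∂ⱼ (D_a b) = D_a (∂ⱼ b) - D_b (∂ⱼ a) + w_a ∂ⱼ b - w_b ∂ⱼ a`. This follows from the chain rule for
cyclic derivatives and the symmetry of second cyclic derivatives, the latter applied to the
derivation `[-, w_b] - D_b`. Modulo commutators, `{a, b}` is `u v ∂ᵥa ∂ᵤb - v u ∂ᵤa ∂ᵥb`, and
skew-symmetry is the comparison of two expansions of `w_a w_b`.
-/

section TwistedDerivation

variable {R A B : Type*} [CommRing R] [Ring A] [Algebra R A] [Ring B] [Algebra R B]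

/-- A linear map `D : A → B` is an `(f, g)`-twisted derivation if it satisfies the Leibniz rule for
the `A`-bimodule structure on `B` in which `A` acts on the left through `f` and on the right through
`g`. Both Leibniz rules of a double bracket are of this form, with values in `A ⊗ A`. -/
def IsTwistedDerivation (f g : A →ₐ[R] B) (D : A →ₗ[R] B) : Prop :=
  ∀ a b, D (a * b) = f a * D b + D a * g b

/-- Ordinary derivations of a possibly noncommutative algebra; `Derivation` requires a commutative
one. -/
abbrev IsDerivation (D : A →ₗ[R] A) : Prop :=
  IsTwistedDerivation (AlgHom.id R A) (AlgHom.id R A) D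

namespace IsTwistedDerivation

variable {f g : A →ₐ[R] B} {D E : A →ₗ[R] B}

protected theorem map_one (hD : IsTwistedDerivation f g D) : D 1 = 0 := by
  simpa using hD 1 1

theorem map_algebraMap (hD : IsTwistedDerivation f g D) (r : R) : D (algebraMap R A r) = 0 := by
  rw [Algebra.algebraMap_eq_smul_one, map_smul, hD.map_one, smul_zero]

theorem add (hD : IsTwistedDerivation f g D) (hE : IsTwistedDerivation f g E) :
    IsTwistedDerivation f g (D + E) := fun a b => by
  simp only [LinearMap.add_apply, hD a b, hE a b]
  noncomm_ring

theorem smul (hD : IsTwistedDerivation f g D) (r : R) : IsTwistedDerivation f g (r • D) :=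
  fun a b => by
    simp only [LinearMap.smul_apply, hD a b, smul_add, mul_smul_comm, smul_mul_assoc]

theorem mulLeft_comp (hD : IsTwistedDerivation f g D) {x : B} (hx : ∀ a, Commute x (f a)) :
    IsTwistedDerivation f g (LinearMap.mulLeft R x ∘ₗ D) := fun a b => by
  simp only [LinearMap.comp_apply, LinearMap.mulLeft_apply, hD a b, mul_add, ← mul_assoc, (hx a).eq]

theorem mulRight_comp (hD : IsTwistedDerivation f g D) {x : B} (hx : ∀ a, Commute x (g a)) :
    IsTwistedDerivation f g (LinearMap.mulRight R x ∘ₗ D) := fun a b => by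
  simp only [LinearMap.comp_apply, LinearMap.mulRight_apply, hD a b, add_mul, mul_assoc, (hx b).eq]

end IsTwistedDerivation

theorem IsDerivation.leibniz {D : A →ₗ[R] A} (hD : IsDerivation D) (a b : A) :
    D (a * b) = a * D b + D a * b :=
  hD a b

theorem IsDerivation.commutator {D E : A →ₗ[R] A} (hD : IsDerivation D) (hE : IsDerivation E) :
    IsDerivation (D ∘ₗ E - E ∘ₗ D) := fun a b => by
  simp only [LinearMap.sub_apply, LinearMap.comp_apply, hD.leibniz, hE.leibniz, map_add,
    AlgHom.id_apply]
  noncomm_ring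

theorem isDerivation_mulRight_sub_mulLeft (w : A) :
    IsDerivation (LinearMap.mulRight R w - LinearMap.mulLeft R w) := fun a b => by
  simp only [LinearMap.sub_apply, LinearMap.mulRight_apply, LinearMap.mulLeft_apply,
    AlgHom.id_apply]
  noncomm_ring

end TwistedDerivation

section FreeTwistedDerivation

open FreeAlgebra (ι)

variable {R X Y B : Type*} [CommRing R] [Ring B] [Algebra R B]

theorem IsTwistedDerivation.ext_ι {f g : FreeAlgebra R X →ₐ[R] B} {D E : FreeAlgebra R X →ₗ[R] B}
    (hD : IsTwistedDerivation f g D) (hE : IsTwistedDerivation f g E)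
    (h : ∀ x, D (ι R x) = E (ι R x)) : D = E := by
  ext a
  induction a using FreeAlgebra.induction with
  | grade0 r => rw [hD.map_algebraMap, hE.map_algebraMap]
  | grade1 x => exact h x
  | mul a b ha hb => rw [hD, hE, ha, hb]
  | add a b ha hb => rw [map_add, map_add, ha, hb]

/-- The homomorphism `a ↦ !![f a, D a; 0, g a]`, where `D` is the `(f, g)`-twisted derivation with
values `w` on the generators: multiplicativity of the upper right entry is the Leibniz rule. -/
def twistedMatrixHom (f g : FreeAlgebra R X →ₐ[R] B) (w : X → B) :
    FreeAlgebra R X →ₐ[R] Matrix (Fin 2) (Fin 2) B :=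
  FreeAlgebra.lift R fun x => !![f (ι R x), w x; 0, g (ι R x)]

theorem twistedMatrixHom_apply (f g : FreeAlgebra R X →ₐ[R] B) (w : X → B) (a : FreeAlgebra R X) :
    twistedMatrixHom f g w a = !![f a, twistedMatrixHom f g w a 0 1; 0, g a] := by
  induction a using FreeAlgebra.induction with
  | grade0 r => ext i j; fin_cases i <;> fin_cases j <;> simp [Matrix.algebraMap_matrix_apply]
  | grade1 x => simp [twistedMatrixHom]
  | mul a b ha hb =>
    rw [map_mul, ha, hb]
    simp
  | add a b ha hb =>
    rw [map_add, ha, hb]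
    simp

/-- The `(f, g)`-twisted derivation of a free algebra with prescribed values `w` on the
generators. -/
def twistedLift (f g : FreeAlgebra R X →ₐ[R] B) (w : X → B) : FreeAlgebra R X →ₗ[R] B :=
  Matrix.entryLinearMap R B 0 1 ∘ₗ (twistedMatrixHom f g w).toLinearMap

theorem twistedLift_ι (f g : FreeAlgebra R X →ₐ[R] B) (w : X → B) (x : X) :
    twistedLift f g w (ι R x) = w x := by
  simp [twistedLift, twistedMatrixHom]

theorem isTwistedDerivation_twistedLift (f g : FreeAlgebra R X →ₐ[R] B) (w : X → B) :
    IsTwistedDerivation f g (twistedLift f g w) := fun a b => by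
  change twistedMatrixHom f g w (a * b) 0 1 = _
  rw [map_mul, twistedMatrixHom_apply f g w a, twistedMatrixHom_apply f g w b]
  simp [twistedLift]

theorem twistedLift_add (f g : FreeAlgebra R X →ₐ[R] B) (w w' : X → B) :
    twistedLift f g (w + w') = twistedLift f g w + twistedLift f g w' :=
  (isTwistedDerivation_twistedLift f g _).ext_ι
    ((isTwistedDerivation_twistedLift f g _).add (isTwistedDerivation_twistedLift f g _))
    fun x => by simp [twistedLift_ι]

theorem twistedLift_smul (f g : FreeAlgebra R X →ₐ[R] B) (r : R) (w : X → B) :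
    twistedLift f g (r • w) = r • twistedLift f g w :=
  (isTwistedDerivation_twistedLift f g _).ext_ι ((isTwistedDerivation_twistedLift f g _).smul r)
    fun x => by simp [twistedLift_ι]

/-- The bilinear map on a product of free algebras which is an `(f₁, g₁)`-twisted derivation in the
first variable, an `(f₂, g₂)`-twisted derivation in the second one, and has values `w` on pairs of
generators. -/
def twistedLift₂ (f₁ g₁ : FreeAlgebra R X →ₐ[R] B) (f₂ g₂ : FreeAlgebra R Y →ₐ[R] B)
    (w : X → Y → B) : FreeAlgebra R X →ₗ[R] FreeAlgebra R Y →ₗ[R] B where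
  toFun a := twistedLift f₂ g₂ fun y => twistedLift f₁ g₁ (fun x => w x y) a
  map_add' a b := by simp only [map_add, ← twistedLift_add, Pi.add_def]
  map_smul' r a := by simp only [map_smul, ← twistedLift_smul, Pi.smul_def, RingHom.id_apply]

variable {f₁ g₁ : FreeAlgebra R X →ₐ[R] B} {f₂ g₂ : FreeAlgebra R Y →ₐ[R] B}

theorem twistedLift₂_apply_ι (w : X → Y → B) (a : FreeAlgebra R X) (y : Y) :
    twistedLift₂ f₁ g₁ f₂ g₂ w a (ι R y) = twistedLift f₁ g₁ (fun x => w x y) a :=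
  twistedLift_ι _ _ _ _

theorem isTwistedDerivation_twistedLift₂ (w : X → Y → B) (a : FreeAlgebra R X) :
    IsTwistedDerivation f₂ g₂ (twistedLift₂ f₁ g₁ f₂ g₂ w a) :=
  isTwistedDerivation_twistedLift _ _ _

theorem isTwistedDerivation_twistedLift₂_flip (hf : ∀ a b, Commute (f₁ a) (f₂ b))
    (hg : ∀ a b, Commute (g₁ a) (g₂ b)) (w : X → Y → B) (b : FreeAlgebra R Y) :
    IsTwistedDerivation f₁ g₁ ((twistedLift₂ f₁ g₁ f₂ g₂ w).flip b) := fun a a' => by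
  set D := twistedLift₂ f₁ g₁ f₂ g₂ w
  have hD : ∀ c, IsTwistedDerivation f₂ g₂ (D c) := isTwistedDerivation_twistedLift₂ w
  suffices D (a * a') =
      LinearMap.mulLeft R (f₁ a) ∘ₗ D a' + LinearMap.mulRight R (g₁ a') ∘ₗ D a from
    LinearMap.congr_fun this b
  refine (hD _).ext_ι (((hD a').mulLeft_comp (hf a)).add ((hD a).mulRight_comp (hg a'))) fun y => ?_
  simpa only [D, LinearMap.add_apply, LinearMap.comp_apply, LinearMap.mulLeft_apply,
    LinearMap.mulRight_apply, twistedLift₂_apply_ι] using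
      isTwistedDerivation_twistedLift f₁ g₁ (fun x => w x y) a a'

theorem twistedBiderivation_ext_ι {D E : FreeAlgebra R X →ₗ[R] FreeAlgebra R Y →ₗ[R] B}
    (hD₁ : ∀ b, IsTwistedDerivation f₁ g₁ (D.flip b)) (hD₂ : ∀ a, IsTwistedDerivation f₂ g₂ (D a))
    (hE₁ : ∀ b, IsTwistedDerivation f₁ g₁ (E.flip b)) (hE₂ : ∀ a, IsTwistedDerivation f₂ g₂ (E a))
    (h : ∀ x y, D (ι R x) (ι R y) = E (ι R x) (ι R y)) : D = E :=
  LinearMap.ext fun a => (hD₂ a).ext_ι (hE₂ a) fun y =>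
    LinearMap.congr_fun ((hD₁ (ι R y)).ext_ι (hE₁ (ι R y)) fun x => h x y) a

end FreeTwistedDerivation

section DoubleBracket

open Algebra.TensorProduct (includeLeft includeRight)

variable {R A : Type*} [CommRing R] [Ring A] [Algebra R A]

/-- Double brackets on an arbitrary algebra: derivations for the outer bimodule structure of `A ⊗ A`
in the second variable and for the inner one in the first. -/
def IsDoubleBracketOver (db : A ⊗[R] A →ₗ[R] A ⊗[R] A) : Prop :=
  (∀ a b c : A, db (a ⊗ₜ[R] (b * c)) =
    (b ⊗ₜ[R] (1 : A)) * db (a ⊗ₜ[R] c) + db (a ⊗ₜ[R] b) * ((1 : A) ⊗ₜ[R] c)) ∧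
  (∀ a b c : A, db ((a * b) ⊗ₜ[R] c) =
    ((1 : A) ⊗ₜ[R] a) * db (b ⊗ₜ[R] c) + db (a ⊗ₜ[R] c) * (b ⊗ₜ[R] (1 : A)))

/-- The bracket `{a, b} = μ(db(a ⊗ b))` associated with a double bracket. -/
def inducedBracket (db : A ⊗[R] A →ₗ[R] A ⊗[R] A) : A →ₗ[R] A →ₗ[R] A :=
  (TensorProduct.curry db).compr₂ (LinearMap.mul' R A)

variable (R A) in
/-- The linear span `[A, A]` of the commutators. -/
def commutatorSpan : Submodule R A :=
  Submodule.span R {z : A | ∃ x y : A, z = x * y - y * x}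

theorem commutator_mem_commutatorSpan (x y : A) : x * y - y * x ∈ commutatorSpan R A :=
  Submodule.subset_span ⟨x, y, rfl⟩

/-- Compare, modulo commutators, the two expansions of `w w'`, where `w` and `w'` are the common
values in the two hypotheses. -/
theorem skew_mem_commutatorSpan {u v p q p' q' : A} (h : v * q - p * u = q * v - u * p)
    (h' : v * q' - p' * u = q' * v - u * p') :
    u * v * q * p' - v * u * p * q' + (u * v * q' * p - v * u * p' * q) ∈ commutatorSpan R A := by
  have hexpand : (v * q - p * u) * (v * q' - p' * u) = (q * v - u * p) * (q' * v - u * p') := by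
    rw [h, h']
  have hc := commutator_mem_commutatorSpan (R := R) (A := A)
  convert add_mem (add_mem (add_mem (hc u (v * q * p')) (hc (u * v * q') p))
    (sub_mem (hc v (q * v * q')) (hc v (u * p * q'))))
    (sub_mem (hc (p * u * p') u) (hc (v * u * p') q)) using 1
  linear_combination (norm := noncomm_ring) -hexpand

theorem commute_includeLeft_includeRight (a b : A) :
    Commute (includeLeft (R := R) (S := R) (B := A) a) (includeRight b) :=
  (Commute.one_right a).tmul (Commute.one_left b)

theorem mul'_tmul_one_mul (a : A) (t : A ⊗[R] A) :
    LinearMap.mul' R A ((a ⊗ₜ 1) * t) = a * LinearMap.mul' R A t := by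
  induction t with
  | zero => simp
  | tmul p q => simp [mul_assoc]
  | add s t hs ht => simp only [mul_add, map_add, hs, ht]

theorem mul'_mul_one_tmul (t : A ⊗[R] A) (a : A) :
    LinearMap.mul' R A (t * (1 ⊗ₜ a)) = LinearMap.mul' R A t * a := by
  induction t with
  | zero => simp
  | tmul p q => simp [mul_assoc]
  | add s t hs ht => simp only [add_mul, map_add, hs, ht]

theorem mul'_mul_tmul_one (t : A ⊗[R] A) (a : A) :
    LinearMap.mul' R A (t * (a ⊗ₜ 1)) = LinearMap.mul' R A ((1 ⊗ₜ a) * t) := by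
  induction t with
  | zero => simp
  | tmul p q => simp [mul_assoc]
  | add s t hs ht => simp only [add_mul, mul_add, map_add, hs, ht]

namespace IsDoubleBracketOver

variable {db : A ⊗[R] A →ₗ[R] A ⊗[R] A}

theorem isTwistedDerivation_right (h : IsDoubleBracketOver db) (a : A) :
    IsTwistedDerivation includeLeft includeRight (TensorProduct.curry db a) :=
  h.1 a

theorem isTwistedDerivation_left (h : IsDoubleBracketOver db) (c : A) :
    IsTwistedDerivation includeRight includeLeft ((TensorProduct.curry db).flip c) :=
  fun a b => h.2 a b c

theorem isDerivation_inducedBracket (h : IsDoubleBracketOver db) (a : A) :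
    IsDerivation (inducedBracket db a) := fun b c => by
  change LinearMap.mul' R A (db (a ⊗ₜ (b * c))) = _
  rw [h.1, map_add, mul'_tmul_one_mul, mul'_mul_one_tmul]
  rfl

end IsDoubleBracketOver

end DoubleBracket

section FreeDoubleBracket

open Algebra.TensorProduct (includeLeft includeRight)
open FreeAlgebra (ι)

variable {R X : Type*} [CommRing R]

theorem IsDoubleBracketOver.ext_ι
    {db db' : FreeAlgebra R X ⊗[R] FreeAlgebra R X →ₗ[R] FreeAlgebra R X ⊗[R] FreeAlgebra R X}
    (h : IsDoubleBracketOver db) (h' : IsDoubleBracketOver db')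
    (heq : ∀ x y, db (ι R x ⊗ₜ ι R y) = db' (ι R x ⊗ₜ ι R y)) : db = db' :=
  TensorProduct.ext <| twistedBiderivation_ext_ι h.isTwistedDerivation_left
    h.isTwistedDerivation_right h'.isTwistedDerivation_left h'.isTwistedDerivation_right heq

theorem existsUnique_isDoubleBracketOver
    (w : X → X → FreeAlgebra R X ⊗[R] FreeAlgebra R X) :
    ∃! db : FreeAlgebra R X ⊗[R] FreeAlgebra R X →ₗ[R] FreeAlgebra R X ⊗[R] FreeAlgebra R X,
      IsDoubleBracketOver db ∧ ∀ x y, db (ι R x ⊗ₜ ι R y) = w x y := by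
  refine existsUnique_of_exists_of_unique
    ⟨TensorProduct.lift (twistedLift₂ includeRight includeLeft includeLeft includeRight w),
      ⟨isTwistedDerivation_twistedLift₂ w, fun a b c => ?_⟩, fun x y => ?_⟩
    fun db db' ⟨h, hw⟩ ⟨h', hw'⟩ => h.ext_ι h' fun x y => (hw x y).trans (hw' x y).symm
  · exact isTwistedDerivation_twistedLift₂_flip
      (fun a b => (commute_includeLeft_includeRight b a).symm) commute_includeLeft_includeRight
      w c a b
  · rw [TensorProduct.lift.tmul, twistedLift₂_apply_ι, twistedLift_ι]

end FreeDoubleBracket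

section CyclicDerivative

open Algebra.TensorProduct (includeLeft includeRight)
open FreeAlgebra (ι)

variable {R X : Type*} [CommRing R] [DecidableEq X]

/-- The double derivation `∂/∂xᵢ`, sending a word to the sum of `q ⊗ p` over its factorizations
`p xᵢ q`. The two factors are swapped so that it is a derivation for the inner bimodule structure,
like `db(- ⊗ c)` for a double bracket `db`. -/
def doubleDeriv (i : X) : FreeAlgebra R X →ₗ[R] FreeAlgebra R X ⊗[R] FreeAlgebra R X :=
  twistedLift includeRight includeLeft (Pi.single i 1)

theorem isTwistedDerivation_doubleDeriv (i : X) :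
    IsTwistedDerivation includeRight includeLeft (doubleDeriv (R := R) i) :=
  isTwistedDerivation_twistedLift _ _ _

/-- The polarized cyclic derivative `cyclicPartial i z a`, sending a word `a` to the sum of `q z p`
over its factorizations `p xᵢ q`: the contribution of `a` to the cyclic derivative of `a z`. Unlike
the cyclic derivative itself, it can be computed by induction on `a`. -/
def cyclicPartial (i : X) : FreeAlgebra R X →ₗ[R] FreeAlgebra R X →ₗ[R] FreeAlgebra R X :=
  ((LinearMap.mul R (FreeAlgebra R X ⊗[R] FreeAlgebra R X)).compl₁₂
    includeRight.toLinearMap (doubleDeriv i)).compr₂ (LinearMap.mul' R (FreeAlgebra R X))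

/-- The cyclic derivative of Rota, Sagan and Stein, sending a word to the sum of `q p` over its
factorizations `p xᵢ q`. -/
abbrev cyclicDeriv (i : X) : FreeAlgebra R X →ₗ[R] FreeAlgebra R X :=
  cyclicPartial i 1

theorem cyclicPartial_apply (i : X) (z a : FreeAlgebra R X) :
    cyclicPartial i z a = LinearMap.mul' R _ ((1 ⊗ₜ z) * doubleDeriv i a) :=
  rfl

theorem cyclicPartial_ι (i x : X) (z : FreeAlgebra R X) :
    cyclicPartial i z (ι R x) = if x = i then z else 0 := by
  rw [cyclicPartial_apply, doubleDeriv, twistedLift_ι, Pi.single_apply]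
  split_ifs <;> simp

theorem cyclicPartial_mul (i : X) (z a b : FreeAlgebra R X) :
    cyclicPartial i z (a * b) = cyclicPartial i (z * a) b + cyclicPartial i (b * z) a := by
  have tmul_mul (x y : FreeAlgebra R X) :
      (1 : FreeAlgebra R X) ⊗ₜ[R] (x * y) = (1 ⊗ₜ x) * (1 ⊗ₜ y) := by simp
  simp only [cyclicPartial_apply, isTwistedDerivation_doubleDeriv i a b, tmul_mul, mul_add, map_add,
    Algebra.TensorProduct.includeLeft_apply, Algebra.TensorProduct.includeRight_apply,
    ← mul'_mul_tmul_one, mul_assoc]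

theorem cyclicPartial_algebraMap (i : X) (z : FreeAlgebra R X) (r : R) :
    cyclicPartial i z (algebraMap R _ r) = 0 := by
  rw [cyclicPartial_apply, (isTwistedDerivation_doubleDeriv i).map_algebraMap, mul_zero, map_zero]

theorem cyclicDeriv_eq_zero_of_mem_commutatorSpan (i : X) {t : FreeAlgebra R X}
    (ht : t ∈ commutatorSpan R (FreeAlgebra R X)) : cyclicDeriv i t = 0 := by
  suffices commutatorSpan R (FreeAlgebra R X) ≤ LinearMap.ker (cyclicDeriv i) from this ht
  rw [commutatorSpan, Submodule.span_le]
  rintro _ ⟨x, y, rfl⟩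
  simp [cyclicPartial_mul, add_comm]

theorem IsDoubleBracketOver.inducedBracket_eq_mul_cyclicDeriv
    {db : FreeAlgebra R X ⊗[R] FreeAlgebra R X →ₗ[R] FreeAlgebra R X ⊗[R] FreeAlgebra R X}
    (h : IsDoubleBracketOver db) {c z : FreeAlgebra R X} {i : X}
    (hz : ∀ x, db (ι R x ⊗ₜ c) = if x = i then z ⊗ₜ 1 else 0) (a : FreeAlgebra R X) :
    inducedBracket db a c = z * cyclicDeriv i a := by
  have hdb : (TensorProduct.curry db).flip c = LinearMap.mulLeft R (z ⊗ₜ 1) ∘ₗ doubleDeriv i :=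
    (h.isTwistedDerivation_left c).ext_ι
      ((isTwistedDerivation_doubleDeriv i).mulLeft_comp (commute_includeLeft_includeRight z))
      fun x => by simp [hz, doubleDeriv, twistedLift_ι, Pi.single_apply]
  calc inducedBracket db a c
      = LinearMap.mul' R _ ((LinearMap.mulLeft R (z ⊗ₜ 1) ∘ₗ doubleDeriv i) a) := by
        rw [← hdb]
        rfl
    _ = z * cyclicDeriv i a := by
        rw [LinearMap.comp_apply, LinearMap.mulLeft_apply, mul'_tmul_one_mul, cyclicPartial_apply,
          ← Algebra.TensorProduct.one_def, one_mul]

variable [Fintype X]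

theorem sum_commutator_ι_cyclicPartial (s a : FreeAlgebra R X) :
    ∑ i, (ι R i * cyclicPartial i s a - cyclicPartial i s a * ι R i) = a * s - s * a := by
  induction a using FreeAlgebra.induction generalizing s with
  | grade0 r => simp [cyclicPartial_algebraMap, Algebra.commutes]
  | grade1 x => simp [cyclicPartial_ι]
  | mul a b ha hb =>
    calc _ = ∑ i, (ι R i * cyclicPartial i (s * a) b - cyclicPartial i (s * a) b * ι R i) +
          ∑ i, (ι R i * cyclicPartial i (b * s) a - cyclicPartial i (b * s) a * ι R i) := by
          rw [← Finset.sum_add_distrib]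
          exact Finset.sum_congr rfl fun i _ => by rw [cyclicPartial_mul]; noncomm_ring
      _ = a * b * s - s * (a * b) := by rw [ha, hb]; noncomm_ring
  | add a b ha hb =>
    simp only [map_add, mul_add, add_mul, add_sub_add_comm, Finset.sum_add_distrib, ha, hb]

theorem sum_commutator_ι_cyclicDeriv (a : FreeAlgebra R X) :
    ∑ i, (ι R i * cyclicDeriv i a - cyclicDeriv i a * ι R i) = 0 := by
  rw [sum_commutator_ι_cyclicPartial, mul_one, one_mul, sub_self]

namespace IsDerivation

variable {D : FreeAlgebra R X →ₗ[R] FreeAlgebra R X}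

theorem mul_apply_sub_sum_mem_commutatorSpan (hD : IsDerivation D) (s b : FreeAlgebra R X) :
    s * D b - ∑ i, D (ι R i) * cyclicPartial i s b ∈ commutatorSpan R (FreeAlgebra R X) := by
  induction b using FreeAlgebra.induction generalizing s with
  | grade0 r => simp [hD.map_algebraMap, cyclicPartial_algebraMap]
  | grade1 x => simpa [cyclicPartial_ι] using commutator_mem_commutatorSpan s (D (ι R x))
  | mul a b ha hb =>
    convert add_mem (add_mem (ha (b * s)) (hb (s * a)))
      (commutator_mem_commutatorSpan (s * D a) b) using 1
    simp only [hD.leibniz, cyclicPartial_mul, mul_add, Finset.sum_add_distrib]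
    noncomm_ring
  | add a b ha hb =>
    convert add_mem (ha s) (hb s) using 1
    simp only [map_add, mul_add, Finset.sum_add_distrib]
    noncomm_ring

theorem apply_sub_sum_mem_commutatorSpan (hD : IsDerivation D) (b : FreeAlgebra R X) :
    D b - ∑ i, D (ι R i) * cyclicDeriv i b ∈ commutatorSpan R (FreeAlgebra R X) := by
  simpa only [one_mul] using hD.mul_apply_sub_sum_mem_commutatorSpan 1 b

theorem cyclicPartial_comp (hD : IsDerivation D) (j : X) (s b : FreeAlgebra R X) :
    cyclicPartial j s (D b) = D (cyclicPartial j s b) - cyclicPartial j (D s) b +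
      ∑ i, cyclicPartial j (cyclicPartial i s b) (D (ι R i)) := by
  induction b using FreeAlgebra.induction generalizing s with
  | grade0 r => simp [hD.map_algebraMap, cyclicPartial_algebraMap]
  | grade1 x =>
    rw [Finset.sum_eq_single x (fun i _ hi => by simp [cyclicPartial_ι, hi.symm]) (by simp)]
    simp only [cyclicPartial_ι]
    split_ifs <;> simp
  | mul a b ha hb =>
    simp only [hD.leibniz, cyclicPartial_mul, map_add, LinearMap.add_apply, ha, hb,
      Finset.sum_add_distrib]
    abel
  | add a b ha hb =>
    simp only [map_add, LinearMap.add_apply, ha, hb, Finset.sum_add_distrib]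
    abel

theorem cyclicDeriv_comp (hD : IsDerivation D) (j : X) (b : FreeAlgebra R X) :
    cyclicDeriv j (D b) =
      D (cyclicDeriv j b) + ∑ i, cyclicPartial j (cyclicDeriv i b) (D (ι R i)) := by
  rw [hD.cyclicPartial_comp, hD.map_one, map_zero, LinearMap.zero_apply, sub_zero]

/-- The noncommutative symmetry of second derivatives: `cyclicDeriv j (D a)` is computed once by the
chain rule and once from the trace formula for `D a`, whose error term `cyclicDeriv j` kills. -/
theorem apply_cyclicDeriv (hD : IsDerivation D) (j : X) (a : FreeAlgebra R X) :
    D (cyclicDeriv j a) = ∑ i, cyclicPartial j (D (ι R i)) (cyclicDeriv i a) := by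
  have htrace := cyclicDeriv_eq_zero_of_mem_commutatorSpan j (hD.apply_sub_sum_mem_commutatorSpan a)
  simp only [map_sub, map_sum, cyclicPartial_mul, one_mul, mul_one, Finset.sum_add_distrib,
    sub_eq_zero] at htrace
  rw [hD.cyclicDeriv_comp] at htrace
  exact add_right_cancel htrace

end IsDerivation

end CyclicDerivative

section Kontsevich

open FreeAlgebra (ι)

variable {R : Type*} [CommRing R]

/-- The values on generators prescribed for Kontsevich's double bracket on `R⟨u, v⟩`, where
`u = ι 0` and `v = ι 1`. -/
def HasKontsevichValues
    (db : FreeAlgebra R (Fin 2) ⊗[R] FreeAlgebra R (Fin 2) →ₗ[R]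
      FreeAlgebra R (Fin 2) ⊗[R] FreeAlgebra R (Fin 2)) : Prop :=
  db (ι R 0 ⊗ₜ ι R 1) = -((ι R 1 * ι R 0) ⊗ₜ 1) ∧
  db (ι R 1 ⊗ₜ ι R 0) = (ι R 0 * ι R 1) ⊗ₜ 1 ∧
  db (ι R 0 ⊗ₜ ι R 0) = 0 ∧
  db (ι R 1 ⊗ₜ ι R 1) = 0

theorem existsUnique_hasKontsevichValues :
    ∃! db : FreeAlgebra R (Fin 2) ⊗[R] FreeAlgebra R (Fin 2) →ₗ[R]
        FreeAlgebra R (Fin 2) ⊗[R] FreeAlgebra R (Fin 2),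
      IsDoubleBracketOver db ∧ HasKontsevichValues db := by
  convert existsUnique_isDoubleBracketOver
    ![![0, -((ι R (1 : Fin 2) * ι R 0) ⊗ₜ 1)], ![(ι R 0 * ι R 1) ⊗ₜ 1, 0]] using 3
  simp only [HasKontsevichValues, Fin.forall_fin_two, Matrix.cons_val_zero, Matrix.cons_val_one]
  tauto

local notation "𝐮" => ι R (0 : Fin 2)
local notation "𝐯" => ι R (1 : Fin 2)
local notation "∂ᵤ" => cyclicDeriv (R := R) (0 : Fin 2)
local notation "∂ᵥ" => cyclicDeriv (R := R) (1 : Fin 2)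

/-- The derivation `{a, -}` for the bracket induced by Kontsevich's double bracket: the
noncommutative Hamiltonian vector field of `a`. -/
def kontsevichDer (a : FreeAlgebra R (Fin 2)) : FreeAlgebra R (Fin 2) →ₗ[R] FreeAlgebra R (Fin 2) :=
  twistedLift (AlgHom.id R _) (AlgHom.id R _) ![𝐮 * 𝐯 * ∂ᵥ a, -(𝐯 * 𝐮 * ∂ᵤ a)]

theorem isDerivation_kontsevichDer (a : FreeAlgebra R (Fin 2)) : IsDerivation (kontsevichDer a) :=
  isTwistedDerivation_twistedLift _ _ _

theorem kontsevichDer_u (a : FreeAlgebra R (Fin 2)) : kontsevichDer a 𝐮 = 𝐮 * 𝐯 * ∂ᵥ a :=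
  twistedLift_ι _ _ _ _

theorem kontsevichDer_v (a : FreeAlgebra R (Fin 2)) : kontsevichDer a 𝐯 = -(𝐯 * 𝐮 * ∂ᵤ a) :=
  twistedLift_ι _ _ _ _

theorem inducedBracket_eq_kontsevichDer
    {db : FreeAlgebra R (Fin 2) ⊗[R] FreeAlgebra R (Fin 2) →ₗ[R]
      FreeAlgebra R (Fin 2) ⊗[R] FreeAlgebra R (Fin 2)}
    (h : IsDoubleBracketOver db) (hv : HasKontsevichValues db) (a : FreeAlgebra R (Fin 2)) :
    inducedBracket db a = kontsevichDer a := by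
  obtain ⟨huv, hvu, huu, hvv⟩ := hv
  refine (h.isDerivation_inducedBracket a).ext_ι (isDerivation_kontsevichDer a)
    (Fin.forall_fin_two.2 ⟨?_, ?_⟩)
  · rw [kontsevichDer_u]
    exact h.inducedBracket_eq_mul_cyclicDeriv (Fin.forall_fin_two.2 (by simp [huu, hvu])) a
  · rw [kontsevichDer_v, ← neg_mul]
    exact h.inducedBracket_eq_mul_cyclicDeriv
      (Fin.forall_fin_two.2 (by simp [huv, hvv, TensorProduct.neg_tmul])) a

/-- The element `w` such that `{a, u v} = u v w` and `{a, v u} = v u w`. -/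
def kontsevichWeight (a : FreeAlgebra R (Fin 2)) : FreeAlgebra R (Fin 2) :=
  𝐯 * ∂ᵥ a - ∂ᵤ a * 𝐮

theorem kontsevichWeight_def (a : FreeAlgebra R (Fin 2)) :
    kontsevichWeight a = 𝐯 * ∂ᵥ a - ∂ᵤ a * 𝐮 :=
  rfl

theorem kontsevichWeight_eq (a : FreeAlgebra R (Fin 2)) :
    kontsevichWeight a = ∂ᵥ a * 𝐯 - 𝐮 * ∂ᵤ a := by
  have h := sum_commutator_ι_cyclicDeriv a
  rw [Fin.sum_univ_two] at h
  rw [kontsevichWeight_def]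
  linear_combination (norm := noncomm_ring) h

theorem kontsevichDer_uv (a : FreeAlgebra R (Fin 2)) :
    kontsevichDer a (𝐮 * 𝐯) = 𝐮 * 𝐯 * kontsevichWeight a := by
  rw [(isDerivation_kontsevichDer a).leibniz, kontsevichDer_u, kontsevichDer_v, kontsevichWeight_eq]
  noncomm_ring

theorem kontsevichDer_vu (a : FreeAlgebra R (Fin 2)) :
    kontsevichDer a (𝐯 * 𝐮) = 𝐯 * 𝐮 * kontsevichWeight a := by
  rw [(isDerivation_kontsevichDer a).leibniz, kontsevichDer_u, kontsevichDer_v,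
    kontsevichWeight_def]
  noncomm_ring

/-- The derivation `[-, w] - {b, -}` with `w` the weight of `b`. Its values on `u` and `v` are those
of `-{b, -}` with the factors in reverse order, which is the form in which the chain rule for
`{a, -}` produces them. -/
def kontsevichDualDer (b : FreeAlgebra R (Fin 2)) :
    FreeAlgebra R (Fin 2) →ₗ[R] FreeAlgebra R (Fin 2) :=
  LinearMap.mulRight R (kontsevichWeight b) - LinearMap.mulLeft R (kontsevichWeight b) +
    (-1 : R) • kontsevichDer b

theorem isDerivation_kontsevichDualDer (b : FreeAlgebra R (Fin 2)) :
    IsDerivation (kontsevichDualDer b) :=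
  (isDerivation_mulRight_sub_mulLeft _).add ((isDerivation_kontsevichDer b).smul _)

theorem kontsevichDualDer_apply (b x : FreeAlgebra R (Fin 2)) :
    kontsevichDualDer b x =
      x * kontsevichWeight b - kontsevichWeight b * x - kontsevichDer b x := by
  simp [kontsevichDualDer, sub_eq_add_neg]

theorem kontsevichDualDer_u (b : FreeAlgebra R (Fin 2)) :
    kontsevichDualDer b 𝐮 = -(∂ᵥ b * 𝐯 * 𝐮) := by
  rw [kontsevichDualDer_apply, kontsevichDer_u]
  nth_rewrite 1 [kontsevichWeight_def]
  rw [kontsevichWeight_eq]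
  noncomm_ring

theorem kontsevichDualDer_v (b : FreeAlgebra R (Fin 2)) :
    kontsevichDualDer b 𝐯 = ∂ᵤ b * 𝐮 * 𝐯 := by
  rw [kontsevichDualDer_apply, kontsevichDer_v]
  nth_rewrite 1 [kontsevichWeight_eq]
  rw [kontsevichWeight_def]
  noncomm_ring

theorem sum_cyclicPartial_kontsevichDer (j : Fin 2) (a b : FreeAlgebra R (Fin 2)) :
    ∑ i, cyclicPartial j (cyclicDeriv i b) (kontsevichDer a (ι R i)) =
      kontsevichWeight a * cyclicDeriv j b - cyclicDeriv j a * kontsevichWeight b +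
        kontsevichDualDer b (cyclicDeriv j a) := by
  rw [(isDerivation_kontsevichDualDer b).apply_cyclicDeriv, Fin.sum_univ_two, Fin.sum_univ_two,
    kontsevichDer_u, kontsevichDer_v, kontsevichDualDer_u, kontsevichDualDer_v]
  simp only [map_neg, LinearMap.neg_apply, cyclicPartial_mul, cyclicPartial_ι, ← mul_assoc]
  match j with
  | 0 =>
    simp only [↓reduceIte, one_ne_zero, kontsevichWeight_def a, kontsevichWeight_eq b]
    noncomm_ring
  | 1 =>
    simp only [↓reduceIte, zero_ne_one, kontsevichWeight_eq a, kontsevichWeight_def b]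
    noncomm_ring

theorem cyclicDeriv_kontsevichDer (j : Fin 2) (a b : FreeAlgebra R (Fin 2)) :
    cyclicDeriv j (kontsevichDer a b) =
      kontsevichDer a (cyclicDeriv j b) - kontsevichDer b (cyclicDeriv j a) +
        kontsevichWeight a * cyclicDeriv j b - kontsevichWeight b * cyclicDeriv j a := by
  rw [(isDerivation_kontsevichDer a).cyclicDeriv_comp, sum_cyclicPartial_kontsevichDer,
    kontsevichDualDer_apply]
  abel

theorem kontsevichDer_kontsevichDer (a b : FreeAlgebra R (Fin 2)) :
    kontsevichDer (kontsevichDer a b) =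
      kontsevichDer a ∘ₗ kontsevichDer b - kontsevichDer b ∘ₗ kontsevichDer a := by
  have ha := isDerivation_kontsevichDer a
  have hb := isDerivation_kontsevichDer b
  refine (isDerivation_kontsevichDer _).ext_ι (ha.commutator hb) (Fin.forall_fin_two.2 ⟨?_, ?_⟩)
  · simp only [LinearMap.sub_apply, LinearMap.comp_apply, kontsevichDer_u, ha.leibniz (𝐮 * 𝐯),
      hb.leibniz (𝐮 * 𝐯), kontsevichDer_uv, cyclicDeriv_kontsevichDer]
    noncomm_ring
  · simp only [LinearMap.sub_apply, LinearMap.comp_apply, kontsevichDer_v, map_neg,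
      ha.leibniz (𝐯 * 𝐮), hb.leibniz (𝐯 * 𝐮), kontsevichDer_vu, cyclicDeriv_kontsevichDer]
    noncomm_ring

theorem kontsevichDer_sub_mem_commutatorSpan (a b : FreeAlgebra R (Fin 2)) :
    kontsevichDer a b - (𝐮 * 𝐯 * ∂ᵥ a * ∂ᵤ b - 𝐯 * 𝐮 * ∂ᵤ a * ∂ᵥ b) ∈
      commutatorSpan R (FreeAlgebra R (Fin 2)) := by
  have h := (isDerivation_kontsevichDer a).apply_sub_sum_mem_commutatorSpan b
  rwa [Fin.sum_univ_two, kontsevichDer_u, kontsevichDer_v, neg_mul, ← sub_eq_add_neg] at h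

theorem kontsevichDer_add_kontsevichDer_swap_mem_commutatorSpan (a b : FreeAlgebra R (Fin 2)) :
    kontsevichDer a b + kontsevichDer b a ∈ commutatorSpan R (FreeAlgebra R (Fin 2)) := by
  have hskew := skew_mem_commutatorSpan (R := R) (kontsevichWeight_eq a) (kontsevichWeight_eq b)
  convert add_mem (add_mem (kontsevichDer_sub_mem_commutatorSpan a b)
    (kontsevichDer_sub_mem_commutatorSpan b a)) hskew using 1
  noncomm_ring

end Kontsevich

theorem stmt10_general {R : Type*} [CommRing R] :
    (∃! db : FreeAlgebra R (Fin 2) ⊗[R] FreeAlgebra R (Fin 2) →ₗ[R]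
        FreeAlgebra R (Fin 2) ⊗[R] FreeAlgebra R (Fin 2),
      IsDoubleBracketOver db ∧ HasKontsevichValues db) ∧
    (∀ db : FreeAlgebra R (Fin 2) ⊗[R] FreeAlgebra R (Fin 2) →ₗ[R]
        FreeAlgebra R (Fin 2) ⊗[R] FreeAlgebra R (Fin 2),
      IsDoubleBracketOver db ∧ HasKontsevichValues db →
      (∀ a b c : FreeAlgebra R (Fin 2),
        inducedBracket db a (inducedBracket db b c) - inducedBracket db b (inducedBracket db a c) =
          inducedBracket db (inducedBracket db a b) c) ∧
      (∀ a b : FreeAlgebra R (Fin 2),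
        inducedBracket db a b + inducedBracket db b a ∈
          commutatorSpan R (FreeAlgebra R (Fin 2)))) := by
  refine ⟨existsUnique_hasKontsevichValues, fun db ⟨h, hv⟩ => ?_⟩
  simp only [inducedBracket_eq_kontsevichDer h hv]
  exact ⟨fun a b c => (LinearMap.congr_fun (kontsevichDer_kontsevichDer a b) c).symm,
    kontsevichDer_add_kontsevichDer_swap_mem_commutatorSpan⟩

/-- There is a unique double bracket `db_K` on `ℂ⟨u,v⟩` with the
prescribed values on generators, and it is a modified double Poisson bracket. -/
theorem stmt10 :
    (∃! db : FreeA2 ⊗[ℂ] FreeA2 →ₗ[ℂ] FreeA2 ⊗[ℂ] FreeA2,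
      IsDoubleBracket db ∧ KontsevichGenVals db) ∧
    (∀ db : FreeA2 ⊗[ℂ] FreeA2 →ₗ[ℂ] FreeA2 ⊗[ℂ] FreeA2,
      IsDoubleBracket db ∧ KontsevichGenVals db →
      (∀ a b c : FreeA2,
        LinearMap.mul' ℂ FreeA2 (db (a ⊗ₜ[ℂ] LinearMap.mul' ℂ FreeA2 (db (b ⊗ₜ[ℂ] c)))) -
        LinearMap.mul' ℂ FreeA2 (db (b ⊗ₜ[ℂ] LinearMap.mul' ℂ FreeA2 (db (a ⊗ₜ[ℂ] c)))) =
        LinearMap.mul' ℂ FreeA2 (db (LinearMap.mul' ℂ FreeA2 (db (a ⊗ₜ[ℂ] b)) ⊗ₜ[ℂ] c))) ∧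
      (∀ a b : FreeA2,
        LinearMap.mul' ℂ FreeA2 (db (a ⊗ₜ[ℂ] b)) + LinearMap.mul' ℂ FreeA2 (db (b ⊗ₜ[ℂ] a)) ∈
        Submodule.span ℂ {z : FreeA2 | ∃ x y : FreeA2, z = x * y - y * x})) :=
  stmt10_general

end
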